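/- Let ω = Σ_{i=1}^l m_i α_i be a minuscule weight whose coefficients m_i are nonnegative rationals, I = {α ∈ S : ⟨ω, α∨⟩ = 0} and W^I = {w ∈ W : w(α) > 0 for all α ∈ I}, and let w be the unique element of W^I with w(ω) = Σ_{i=1}^l (m_i − ⌈m_i⌉) α_i (⌈·⌉ the ceiling). If σ ∈ W^I satisfies σ(nω) ≤ 0 for some positive integer n, then w ≤ σ, i.e., ℓ(σ) = ℓ(w) + ℓ(σw^{−1}). -/

import Mathlib

open scoped RealInnerProductSpace

/-- A finite reduced crystallographic root system `Φ` spanning a real inner product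
space `V`, together with a fixed base of simple roots `α 0, …, α (l-1)`: every root is
a nonnegative or nonpositive integral combination of the simple roots.  The simple
reflections `s i` are given by the usual formula `s_α(λ) = λ − ⟨λ, α∨⟩ α`. -/
structure RootSystemWithBase (V : Type*) [NormedAddCommGroup V] [InnerProductSpace ℝ V] where
  l : ℕ
  Φ : Finset V
  α : Fin l → V
  s : Fin l → V ≃ₗ[ℝ] V
  α_mem : ∀ i, α i ∈ Φ
  root_ne_zero : ∀ β ∈ Φ, β ≠ (0 : V)
  root_span : Submodule.span ℝ (Φ : Set V) = ⊤
  simple_indep : LinearIndependent ℝ α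
  crystallographic : ∀ β ∈ Φ, ∀ γ ∈ Φ, ∃ z : ℤ, 2 * ⟪β, γ⟫ / ⟪γ, γ⟫ = (z : ℝ)
  reduced : ∀ β ∈ Φ, ∀ c : ℝ, c • β ∈ Φ → c = 1 ∨ c = -1
  base : ∀ β ∈ Φ,
    (∃ c : Fin l → ℤ, (∀ i, 0 ≤ c i) ∧ β = ∑ i, (c i : ℝ) • α i) ∨
    (∃ c : Fin l → ℤ, (∀ i, 0 ≤ c i) ∧ β = -(∑ i, (c i : ℝ) • α i))
  s_apply : ∀ i v, s i v = v - (2 * ⟪v, α i⟫ / ⟪α i, α i⟫) • α i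
  s_root : ∀ β ∈ Φ, ∀ i, s i β ∈ Φ

namespace RootSystemWithBase

variable {V : Type*} [NormedAddCommGroup V] [InnerProductSpace ℝ V]

/-- The pairing `⟨λ, β∨⟩ = 2(λ,β)/(β,β)`. -/
noncomputable def pairing (_D : RootSystemWithBase V) (lam β : V) : ℝ :=
  2 * ⟪lam, β⟫ / ⟪β, β⟫

/-- The Weyl group: the subgroup of `GL(V)` generated by the simple reflections. -/
def W (D : RootSystemWithBase V) : Subgroup (V ≃ₗ[ℝ] V) := Subgroup.closure (Set.range D.s)

/-- The product `s_{i₁} · s_{i₂} ⋯ s_{i_k}` of simple reflections along a word. -/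
def wordProd (D : RootSystemWithBase V) (L : List (Fin D.l)) : V ≃ₗ[ℝ] V := (L.map D.s).prod

/-- The length `ℓ(w)`: the least `k` such that `w` is a product of `k` simple
reflections. -/
noncomputable def len (D : RootSystemWithBase V) (w : V ≃ₗ[ℝ] V) : ℕ :=
  sInf {k | ∃ L : List (Fin D.l), L.length = k ∧ D.wordProd L = w}

/-- `v` is a linear combination of the simple roots with all coefficients `≥ 0`. -/
def IsNonnegComb (D : RootSystemWithBase V) (v : V) : Prop :=
  ∃ c : Fin D.l → ℝ, (∀ i, 0 ≤ c i) ∧ v = ∑ i, c i • D.α i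

/-- `v > 0`: a nonzero nonnegative combination of the simple roots. -/
def IsPos (D : RootSystemWithBase V) (v : V) : Prop := D.IsNonnegComb v ∧ v ≠ 0

/-- `x ≤ y` for vectors: `y − x` is a nonnegative combination of the simple roots. -/
def vle (D : RootSystemWithBase V) (x y : V) : Prop := D.IsNonnegComb (y - x)

/-- `λ` is dominant: `⟨λ, αᵢ∨⟩ ≥ 0` for all `i`. -/
def IsDominant (D : RootSystemWithBase V) (lam : V) : Prop :=
  ∀ i, 0 ≤ D.pairing lam (D.α i)

/-- `ω` is minuscule: dominant with `⟨ω, β∨⟩ ∈ {−1, 0, 1}` for every root `β`. -/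
def IsMinuscule (D : RootSystemWithBase V) (ω : V) : Prop :=
  D.IsDominant ω ∧ ∀ β ∈ D.Φ, D.pairing ω β = -1 ∨ D.pairing ω β = 0 ∨ D.pairing ω β = 1

/-- `W^I = {w ∈ W : w(α) > 0 for all α ∈ I}` where `I = {α ∈ S : ⟨ω, α∨⟩ = 0}`. -/
def WI (D : RootSystemWithBase V) (ω : V) : Set (V ≃ₗ[ℝ] V) :=
  {w | w ∈ D.W ∧ ∀ i, D.pairing ω (D.α i) = 0 → D.IsPos (w (D.α i))}

/-- `w ≤ τ` in `W`:  `ℓ(τ) = ℓ(w) + ℓ(τ w⁻¹)`. -/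
def wle (D : RootSystemWithBase V) (w τ : V ≃ₗ[ℝ] V) : Prop :=
  D.len τ = D.len w + D.len (τ * w⁻¹)

end RootSystemWithBase

namespace RootSystemWithBase

section Helpers

variable {V : Type*} [NormedAddCommGroup V] [InnerProductSpace ℝ V] (D : RootSystemWithBase V)

lemma span_alpha : ⊤ ≤ Submodule.span ℝ (Set.range D.α) := by
  rw [← D.root_span, Submodule.span_le]
  intro β hβ
  have key : ∀ c : Fin D.l → ℤ, (∑ i, (c i : ℝ) • D.α i) ∈ Submodule.span ℝ (Set.range D.α) :=
    fun c => Submodule.sum_mem _ fun i _ =>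
      Submodule.smul_mem _ _ (Submodule.subset_span ⟨i, rfl⟩)
  rcases D.base β hβ with ⟨c, -, h⟩ | ⟨c, -, h⟩
  · rw [h]; exact key c
  · rw [h]; exact Submodule.neg_mem _ (key c)

/-- The basis of simple roots. -/
noncomputable def bas : Module.Basis (Fin D.l) ℝ V :=
  Module.Basis.mk D.simple_indep D.span_alpha

/-- Coordinates in the basis of simple roots. -/
noncomputable def co (i : Fin D.l) : V →ₗ[ℝ] ℝ := D.bas.coord i

lemma co_sum (c : Fin D.l → ℝ) (j : Fin D.l) : D.co j (∑ i, c i • D.α i) = c j := by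
  have : ∀ i, D.α i = D.bas i := fun i => by simp [bas]
  simp only [this, co, Module.Basis.coord_apply]
  rw [D.bas.repr_sum_self]

lemma sum_co (v : V) : v = ∑ i, D.co i v • D.α i := by
  have : ∀ i, D.α i = D.bas i := fun i => by simp [bas]
  simp only [this, co, Module.Basis.coord_apply]
  exact (D.bas.sum_repr v).symm

lemma co_alpha (i j : Fin D.l) : D.co j (D.α i) = if j = i then 1 else 0 := by
  have := D.co_sum (fun k => if k = i then 1 else 0) j
  simpa using this

lemma nn_iff (v : V) : D.IsNonnegComb v ↔ ∀ i, 0 ≤ D.co i v := by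
  constructor
  · rintro ⟨c, hc, rfl⟩ i
    rw [co_sum]; exact hc i
  · intro h
    exact ⟨fun i => D.co i v, h, D.sum_co v⟩

lemma eq_zero_of_nn {v : V} (h : D.IsNonnegComb v) (h' : D.IsNonnegComb (-v)) : v = 0 := by
  rw [nn_iff] at h h'
  rw [D.sum_co v]
  refine Finset.sum_eq_zero fun i _ => ?_
  have h1 := h i
  have h2 := h' i
  rw [map_neg] at h2
  have : D.co i v = 0 := by linarith
  rw [this, zero_smul]

lemma root_nn {β : V} (hβ : β ∈ D.Φ) : D.IsNonnegComb β ∨ D.IsNonnegComb (-β) := by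
  rcases D.base β hβ with ⟨c, hc, h⟩ | ⟨c, hc, h⟩
  · exact Or.inl ⟨fun i => c i, fun i => Int.cast_nonneg (hc i), h⟩
  · refine Or.inr ⟨fun i => c i, fun i => Int.cast_nonneg (hc i), ?_⟩
    rw [h, neg_neg]

lemma alpha_nn (i : Fin D.l) : D.IsNonnegComb (D.α i) := by
  rw [nn_iff]; intro j; rw [co_alpha]; split_ifs <;> norm_num

lemma alpha_inner_pos (i : Fin D.l) : 0 < ⟪D.α i, D.α i⟫ :=
  real_inner_self_pos.mpr (D.root_ne_zero _ (D.α_mem i))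

lemma s_pair (i : Fin D.l) (v : V) : D.s i v = v - D.pairing v (D.α i) • D.α i := D.s_apply i v

lemma pair_inner (v : V) (i : Fin D.l) :
    D.pairing v (D.α i) * ⟪D.α i, D.α i⟫ = 2 * ⟪v, D.α i⟫ := by
  have := (D.alpha_inner_pos i).ne'
  unfold pairing; field_simp

lemma s_inner (i : Fin D.l) (u v : V) : ⟪D.s i u, D.s i v⟫ = ⟪u, v⟫ := by
  have h1 := D.pair_inner u i
  have h2 := D.pair_inner v i
  rw [s_pair, s_pair]
  simp only [inner_sub_left, inner_sub_right, inner_smul_left, inner_smul_right,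
    RCLike.conj_to_real]
  rw [real_inner_comm v (D.α i)]
  linear_combination (D.pairing v (D.α i)) * h1 / 2 + (D.pairing u (D.α i)) * h2 / 2

lemma s_alpha (i : Fin D.l) : D.s i (D.α i) = - D.α i := by
  have h : D.pairing (D.α i) (D.α i) = 2 := by
    have := (D.alpha_inner_pos i).ne'
    unfold pairing; field_simp
  rw [s_pair, h, two_smul]; abel

lemma s_s (i : Fin D.l) (v : V) : D.s i (D.s i v) = v := by
  conv_lhs => rw [D.s_pair i v]
  rw [map_sub, map_smul, s_alpha, s_pair]
  simp

lemma s_mul_s (i : Fin D.l) : D.s i * D.s i = 1 := by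
  ext v; exact D.s_s i v

lemma s_inv (i : Fin D.l) : (D.s i)⁻¹ = D.s i :=
  inv_eq_of_mul_eq_one_left (D.s_mul_s i)

lemma wordProd_nil : D.wordProd [] = 1 := rfl

lemma wordProd_cons (i : Fin D.l) (L : List (Fin D.l)) :
    D.wordProd (i :: L) = D.s i * D.wordProd L := by simp [wordProd]

lemma wordProd_append (L M : List (Fin D.l)) :
    D.wordProd (L ++ M) = D.wordProd L * D.wordProd M := by simp [wordProd]

lemma s_mem (i : Fin D.l) : D.s i ∈ D.W := Subgroup.subset_closure ⟨i, rfl⟩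

lemma W_word {g : V ≃ₗ[ℝ] V} (hg : g ∈ D.W) : ∃ L, D.wordProd L = g := by
  unfold W at hg
  induction hg using Subgroup.closure_induction with
  | mem x hx =>
    obtain ⟨i, rfl⟩ := hx
    exact ⟨[i], by simp [wordProd]⟩
  | one => exact ⟨[], rfl⟩
  | mul x y _ _ hx hy =>
    obtain ⟨L, rfl⟩ := hx
    obtain ⟨M, rfl⟩ := hy
    exact ⟨L ++ M, D.wordProd_append L M⟩
  | inv x _ hx =>
    obtain ⟨L, rfl⟩ := hx
    clear * -
    induction L with
    | nil => exact ⟨[], by simp [wordProd]⟩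
    | cons i L ih =>
      obtain ⟨M, hM⟩ := ih
      refine ⟨M ++ [i], ?_⟩
      rw [wordProd_append, hM, D.wordProd_cons i L, mul_inv_rev, s_inv]
      simp [wordProd]

lemma word_mem (L : List (Fin D.l)) : D.wordProd L ∈ D.W := by
  induction L with
  | nil => exact D.W.one_mem
  | cons i L ih => rw [wordProd_cons]; exact D.W.mul_mem (D.s_mem i) ih

lemma W_inner {g : V ≃ₗ[ℝ] V} (hg : g ∈ D.W) (u v : V) : ⟪g u, g v⟫ = ⟪u, v⟫ := by
  obtain ⟨L, rfl⟩ := D.W_word hg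
  induction L with
  | nil => rfl
  | cons i L ih =>
    rw [wordProd_cons, LinearEquiv.mul_apply, LinearEquiv.mul_apply, s_inner]
    exact ih (D.word_mem L)

lemma W_root {g : V ≃ₗ[ℝ] V} (hg : g ∈ D.W) {β : V} (hβ : β ∈ D.Φ) : g β ∈ D.Φ := by
  obtain ⟨L, rfl⟩ := D.W_word hg
  induction L with
  | nil => exact hβ
  | cons i L ih =>
    rw [wordProd_cons, LinearEquiv.mul_apply]
    exact D.s_root _ (ih (D.word_mem L)) i

lemma W_pairing {g : V ≃ₗ[ℝ] V} (hg : g ∈ D.W) (u v : V) :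
    D.pairing (g u) (g v) = D.pairing u v := by
  unfold pairing; rw [D.W_inner hg, D.W_inner hg]

lemma co_s (i j : Fin D.l) (h : j ≠ i) (v : V) : D.co j (D.s i v) = D.co j v := by
  rw [s_pair, map_sub, map_smul, co_alpha, if_neg h]; simp

lemma eq_alpha {β : V} (hβ : β ∈ D.Φ) (hn : D.IsNonnegComb β) (i : Fin D.l)
    (hs : ¬ D.IsNonnegComb (D.s i β)) : β = D.α i := by
  have h1 := (D.root_nn (D.s_root β hβ i)).resolve_left hs
  rw [nn_iff] at h1 hn
  have h0 : ∀ j, j ≠ i → D.co j β = 0 := by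
    intro j hj
    have a := h1 j
    rw [map_neg, D.co_s i j hj] at a
    have b := hn j
    linarith
  have h2 : β = D.co i β • D.α i := by
    conv_lhs => rw [D.sum_co β]
    refine Finset.sum_eq_single i (fun j _ hj => by rw [h0 j hj, zero_smul]) (by simp)
  rcases D.reduced _ (D.α_mem i) (D.co i β) (h2 ▸ hβ) with h | h
  · rw [h2, h, one_smul]
  · have := hn i; rw [h] at this; norm_num at this

lemma exists_split (L : List (Fin D.l)) {β : V} (hβ : β ∈ D.Φ) (hn : D.IsNonnegComb β)
    (h : ¬ D.IsNonnegComb (D.wordProd L β)) :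
    ∃ A j B, L = A ++ j :: B ∧ D.wordProd B β = D.α j := by
  induction L with
  | nil => exact absurd hn h
  | cons i L ih =>
    by_cases hL : D.IsNonnegComb (D.wordProd L β)
    · exact ⟨[], i, L, rfl, D.eq_alpha (D.W_root (D.word_mem L) hβ) hL i
        (by rwa [wordProd_cons, LinearEquiv.mul_apply] at h)⟩
    · obtain ⟨A, j, B, rfl, hB⟩ := ih hL
      exact ⟨i :: A, j, B, rfl, hB⟩

lemma conj_s {g : V ≃ₗ[ℝ] V} (hg : g ∈ D.W) (k j : Fin D.l) (h : g (D.α k) = D.α j) :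
    D.s j * g * D.s k = g := by
  have : g * D.s k = D.s j * g := by
    ext v
    simp only [LinearEquiv.mul_apply]
    rw [s_pair, s_pair, map_sub, map_smul, ← h, D.W_pairing hg]
  rw [mul_assoc, this, ← mul_assoc, s_mul_s, one_mul]

lemma word_eq_one : ∀ (n : ℕ) (L : List (Fin D.l)), L.length = n →
    (∀ i, D.IsNonnegComb (D.wordProd L (D.α i))) → D.wordProd L = 1 := by
  intro n
  induction n using Nat.strong_induction_on with
  | _ n ih =>
    intro L hL hpos
    rcases List.eq_nil_or_concat L with rfl | ⟨L', k, rfl⟩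
    · rfl
    · rw [List.concat_eq_append] at *
      have hk := hpos k
      have e1 : D.wordProd [k] = D.s k := by simp [wordProd]
      rw [wordProd_append, e1, LinearEquiv.mul_apply, s_alpha, map_neg] at hk
      have hnot : ¬ D.IsNonnegComb (D.wordProd L' (D.α k)) := fun hc =>
        D.root_ne_zero _ (D.W_root (D.word_mem L') (D.α_mem k)) (D.eq_zero_of_nn hc hk)
      obtain ⟨A, j, B, rfl, hB⟩ := D.exists_split L' (D.α_mem k) (D.alpha_nn k) hnot
      have e : D.wordProd (A ++ j :: B ++ [k]) = D.wordProd (A ++ B) := by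
        rw [wordProd_append, e1, wordProd_append, wordProd_cons, wordProd_append, mul_assoc,
          D.conj_s (D.word_mem B) k j hB]
      rw [e] at hpos ⊢
      refine ih _ ?_ (A ++ B) rfl hpos
      simp at hL ⊢; omega

lemma inner_nonneg {ω v : V} (hd : D.IsDominant ω) (hv : D.IsNonnegComb v) : 0 ≤ ⟪ω, v⟫ := by
  obtain ⟨c, hc, rfl⟩ := hv
  rw [inner_sum]
  refine Finset.sum_nonneg fun i _ => ?_
  rw [inner_smul_right]
  have h1 := D.pair_inner ω i
  have h2 := mul_nonneg (hd i) (D.alpha_inner_pos i).le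
  exact mul_nonneg (hc i) (by linarith)

lemma pairing_zero_iff (ω : V) (i : Fin D.l) :
    D.pairing ω (D.α i) = 0 ↔ ⟪ω, D.α i⟫ = 0 := by
  have h1 := D.pair_inner ω i
  have h2 := D.alpha_inner_pos i
  constructor
  · intro h; rw [h] at h1; linarith
  · intro h; unfold pairing; rw [h]; simp

lemma WI_nn {ω v : V} (hd : D.IsDominant ω) {τ : V ≃ₗ[ℝ] V} (hτ : τ ∈ D.WI ω)
    (hv : D.IsNonnegComb v) (h0 : ⟪ω, v⟫ = 0) : D.IsNonnegComb (τ v) := by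
  obtain ⟨c, hc, rfl⟩ := hv
  rw [inner_sum] at h0
  rw [nn_iff]
  intro j
  rw [map_sum, map_sum]
  have hterm : ∀ i ∈ Finset.univ, 0 ≤ ⟪ω, c i • D.α i⟫ := fun i _ => by
    rw [inner_smul_right]
    exact mul_nonneg (hc i) (D.inner_nonneg hd (D.alpha_nn i))
  have h1 := (Finset.sum_eq_zero_iff_of_nonneg hterm).mp h0
  refine Finset.sum_nonneg fun i hi => ?_
  have h2 := h1 i hi
  rw [inner_smul_right, mul_eq_zero] at h2
  rw [map_smul, map_smul, smul_eq_mul]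
  rcases h2 with h2 | h2
  · rw [h2, zero_mul]
  · exact mul_nonneg (hc i)
      ((D.nn_iff _).mp (hτ.2 i ((D.pairing_zero_iff ω i).mpr h2)).1 j)

lemma WI_unique {ω : V} (hd : D.IsDominant ω) {σ τ : V ≃ₗ[ℝ] V} (hσ : σ ∈ D.WI ω)
    (hτ : τ ∈ D.WI ω) (h : σ ω = τ ω) : σ = τ := by
  have hg : τ⁻¹ * σ ∈ D.W := D.W.mul_mem (D.W.inv_mem hτ.1) hσ.1
  have hτg : ∀ v, τ ((τ⁻¹ * σ) v) = σ v := fun v => by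
    rw [← LinearEquiv.mul_apply, mul_inv_cancel_left]
  have hgω : (τ⁻¹ * σ) ω = ω := τ.injective (by rw [hτg, h])
  have hin : ∀ v, ⟪ω, (τ⁻¹ * σ) v⟫ = ⟪ω, v⟫ := fun v => by
    conv_lhs => rw [← hgω]
    exact D.W_inner hg _ _
  have hpos : ∀ i, D.IsNonnegComb ((τ⁻¹ * σ) (D.α i)) := by
    intro i
    by_contra hc
    have hneg := (D.root_nn (D.W_root hg (D.α_mem i))).resolve_left hc
    have h1 := D.inner_nonneg hd hneg
    rw [inner_neg_right, hin] at h1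
    have h2 := D.inner_nonneg hd (D.alpha_nn i)
    have h3 : ⟪ω, D.α i⟫ = 0 := by linarith
    have h4 := D.WI_nn hd hτ hneg (by rw [inner_neg_right, hin, h3, neg_zero])
    rw [map_neg, hτg] at h4
    have h5 := hσ.2 i ((D.pairing_zero_iff ω i).mpr h3)
    exact h5.2 (D.eq_zero_of_nn h5.1 h4)
  obtain ⟨L, hL⟩ := D.W_word hg
  rw [← hL] at hpos
  have := D.word_eq_one _ L rfl hpos
  rw [hL] at this
  exact (inv_mul_eq_one.mp this).symm

lemma pairing_orbit {ω : V} (hmin : D.IsMinuscule ω) {g : V ≃ₗ[ℝ] V} (hg : g ∈ D.W)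
    (i : Fin D.l) : D.pairing (g ω) (D.α i) = -1 ∨ D.pairing (g ω) (D.α i) = 0 ∨
      D.pairing (g ω) (D.α i) = 1 := by
  have h := hmin.2 _ (D.W_root (D.W.inv_mem hg) (D.α_mem i))
  have e : D.pairing ω (g⁻¹ (D.α i)) = D.pairing (g ω) (D.α i) := by
    rw [← D.W_pairing hg, ← LinearEquiv.mul_apply g, mul_inv_cancel]; rfl
  rwa [e] at h

lemma s_mul_WI {ω : V} {g : V ≃ₗ[ℝ] V} (hg : g ∈ D.WI ω) (i : Fin D.l)
    (h : D.pairing (g ω) (D.α i) ≠ 0) : D.s i * g ∈ D.WI ω := by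
  refine ⟨D.W.mul_mem (D.s_mem i) hg.1, fun j hj => ?_⟩
  rw [LinearEquiv.mul_apply]
  have hr := D.W_root hg.1 (D.α_mem j)
  refine ⟨?_, D.root_ne_zero _ (D.s_root _ hr i)⟩
  by_contra hc
  have := D.eq_alpha hr (hg.2 j hj).1 i hc
  rw [← this, D.W_pairing hg.1] at h
  exact h hj

/-- Integrality of the coordinates of `u ω - ω`, and the Lipschitz bound for the height. -/
lemma word_height {ω : V} (hmin : D.IsMinuscule ω) (L : List (Fin D.l)) :
    (∀ j, ∃ z : ℤ, D.co j ω - D.co j (D.wordProd L ω) = z) ∧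
    ∑ j, (D.co j ω - D.co j (D.wordProd L ω)) ≤ L.length := by
  induction L with
  | nil => simp [wordProd_nil]; exact fun _ => ⟨0, by simp⟩
  | cons i L ih =>
    have hp := D.pairing_orbit hmin (D.word_mem L) i
    rw [wordProd_cons, LinearEquiv.mul_apply, s_pair]
    set p := D.pairing (D.wordProd L ω) (D.α i) with hpdef
    have hpz : ∃ z : ℤ, p = z := by
      rcases hp with h | h | h
      · exact ⟨-1, by rw [h]; simp⟩
      · exact ⟨0, by rw [h]; simp⟩
      · exact ⟨1, by rw [h]; simp⟩
    have hp1 : p ≤ 1 := by rcases hp with h | h | h <;> rw [h] <;> norm_num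
    obtain ⟨z, hz⟩ := hpz
    have e : ∀ j, D.co j (D.wordProd L ω - p • D.α i) =
        D.co j (D.wordProd L ω) - if j = i then p else 0 := by
      intro j; rw [map_sub, map_smul, co_alpha]; simp
    simp only [e]
    constructor
    · intro j
      obtain ⟨y, hy⟩ := ih.1 j
      by_cases hj : j = i
      · refine ⟨y + z, ?_⟩
        rw [if_pos hj]; push_cast; linarith
      · refine ⟨y, ?_⟩
        rw [if_neg hj]; linarith
    · have : ∑ j, (D.co j ω - (D.co j (D.wordProd L ω) - if j = i then p else 0)) =
          ∑ j, (D.co j ω - D.co j (D.wordProd L ω)) + p := by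
        simp only [sub_sub_eq_add_sub, add_sub_right_comm, Finset.sum_add_distrib]
        simp
      rw [this]
      have := ih.2
      rw [List.length_cons]; push_cast; linarith

lemma chain {ω : V} (hmin : D.IsMinuscule ω) : ∀ (N : ℕ) (w σ : V ≃ₗ[ℝ] V),
    w ∈ D.WI ω → σ ∈ D.WI ω → ∀ k : Fin D.l → ℕ, w ω - σ ω = ∑ i, (k i : ℝ) • D.α i →
    ∑ i, k i = N → ∃ L : List (Fin D.l), L.length = N ∧ D.wordProd L * w = σ := by
  intro N
  induction N with
  | zero =>
    intro w σ hw hσ k hk hN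
    refine ⟨[], rfl, ?_⟩
    rw [wordProd_nil, one_mul]
    refine D.WI_unique hmin.1 hw hσ (sub_eq_zero.mp ?_)
    rw [hk]
    refine Finset.sum_eq_zero fun i hi => ?_
    rw [Finset.sum_eq_zero_iff.mp hN i hi]; simp
  | succ N ih =>
    intro w σ hw hσ k hk hN
    obtain ⟨i, hki, hi⟩ : ∃ i, 0 < k i ∧ 0 < ⟪w ω - σ ω, D.α i⟫ := by
      by_contra! hc
      have h1 : ⟪w ω - σ ω, w ω - σ ω⟫ ≤ 0 := by
        conv_lhs => rw [hk, ← hk]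
        nth_rw 2 [hk]
        rw [inner_sum]
        refine Finset.sum_nonpos fun i _ => ?_
        rw [inner_smul_right]
        rcases Nat.eq_zero_or_pos (k i) with h | h
        · rw [h]; simp
        · exact mul_nonpos_of_nonneg_of_nonpos (Nat.cast_nonneg _) (hc i h)
      have h2 : w ω - σ ω = 0 := by
        by_contra h
        exact absurd (real_inner_self_pos.mpr h) (not_lt.mpr h1)
      have h3 : ∀ i, k i = 0 := by
        intro i
        have := D.co_sum (fun i => (k i : ℝ)) i
        rw [← hk, h2, map_zero] at this
        exact_mod_cast this.symm
      simp [h3] at hN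
    have hlt : D.pairing (σ ω) (D.α i) < D.pairing (w ω) (D.α i) := by
      have h1 := D.pair_inner (σ ω) i
      have h2 := D.pair_inner (w ω) i
      rw [inner_sub_left] at hi
      exact lt_of_mul_lt_mul_right (by linarith) (D.alpha_inner_pos i).le
    have hk' : ∑ j, ((if j = i then k j - 1 else k j : ℕ) : ℝ) • D.α j =
        ∑ j, (k j : ℝ) • D.α j - D.α i := by
      have : ∀ j, ((if j = i then k j - 1 else k j : ℕ) : ℝ) • D.α j =
          (k j : ℝ) • D.α j - if j = i then D.α j else 0 := by
        intro j
        by_cases hj : j = i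
        · subst hj
          rw [if_pos rfl, if_pos rfl, Nat.cast_sub hki, sub_smul]; simp
        · rw [if_neg hj, if_neg hj, sub_zero]
      simp only [this, Finset.sum_sub_distrib]
      simp
    have hN' : ∑ j, (if j = i then k j - 1 else k j) = N := by
      have : ∑ j, k j = ∑ j, ((if j = i then k j - 1 else k j) + if j = i then 1 else 0) := by
        refine Finset.sum_congr rfl fun j _ => ?_
        by_cases hj : j = i
        · subst hj; simp; omega
        · simp [hj]
      rw [Finset.sum_add_distrib] at this
      simp at this
      omega
    by_cases h1 : D.pairing (w ω) (D.α i) = 1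
    · obtain ⟨L, hL, hw'⟩ := ih (D.s i * w) σ (D.s_mul_WI hw i (by rw [h1]; norm_num)) hσ _
        (by rw [hk', ← hk, LinearEquiv.mul_apply, s_pair, h1, one_smul]; abel) hN'
      refine ⟨L ++ [i], by simp [hL], ?_⟩
      rw [wordProd_append, mul_assoc, ← hw']
      simp [wordProd]
    · have h2 : D.pairing (σ ω) (D.α i) = -1 := by
        rcases D.pairing_orbit hmin hw.1 i with h | h | h <;>
        rcases D.pairing_orbit hmin hσ.1 i with h' | h' | h' <;>
        first
          | exact h'
          | exact absurd h h1
          | (rw [h, h'] at hlt; norm_num at hlt)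
      obtain ⟨L, hL, hw'⟩ := ih w (D.s i * σ) hw (D.s_mul_WI hσ i (by rw [h2]; norm_num)) _
        (by rw [hk', ← hk, LinearEquiv.mul_apply, s_pair, h2, neg_one_smul]; abel) hN'
      refine ⟨i :: L, by simp [hL], ?_⟩
      rw [wordProd_cons, mul_assoc, hw', ← mul_assoc, s_mul_s, one_mul]

lemma len_le (L : List (Fin D.l)) : D.len (D.wordProd L) ≤ L.length :=
  Nat.sInf_le ⟨L, rfl, rfl⟩

lemma len_word {g : V ≃ₗ[ℝ] V} (hg : g ∈ D.W) : ∃ L, L.length = D.len g ∧ D.wordProd L = g := by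
  obtain ⟨L, hL⟩ := D.W_word hg
  exact Nat.sInf_mem (s := {k | ∃ L : List (Fin D.l), L.length = k ∧ D.wordProd L = g})
    ⟨_, L, rfl, hL⟩

lemma len_mul_le {g h : V ≃ₗ[ℝ] V} (hg : g ∈ D.W) (hh : h ∈ D.W) :
    D.len (g * h) ≤ D.len g + D.len h := by
  obtain ⟨L, hL, rfl⟩ := D.len_word hg
  obtain ⟨M, hM, rfl⟩ := D.len_word hh
  rw [← hL, ← hM, ← wordProd_append, ← List.length_append]
  exact D.len_le _

lemma one_mem_WI (ω : V) : (1 : V ≃ₗ[ℝ] V) ∈ D.WI ω :=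
  ⟨D.W.one_mem, fun i _ => ⟨D.alpha_nn i, D.root_ne_zero _ (D.α_mem i)⟩⟩

end Helpers

end RootSystemWithBase

/-- Let `ω = ∑ m i • α i` be a minuscule weight with nonnegative
rational coefficients and `w` the unique element of `W^I` with
`w(ω) = ∑ (m i − ⌈m i⌉) • α i`.  If `σ ∈ W^I` satisfies `σ(nω) ≤ 0` for some positive
integer `n`, then `w ≤ σ`, that is, `ℓ(σ) = ℓ(w) + ℓ(σ w⁻¹)`. -/
theorem stmt8 {V : Type*} [NormedAddCommGroup V] [InnerProductSpace ℝ V]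
    (D : RootSystemWithBase V) (m : Fin D.l → ℚ) (hm : ∀ i, 0 ≤ m i)
    (ω : V) (hω : ω = ∑ i, (m i : ℝ) • D.α i) (hmin : D.IsMinuscule ω)
    (w : V ≃ₗ[ℝ] V) (hwI : w ∈ D.WI ω)
    (hwω : w ω = ∑ i, ((m i : ℝ) - ((⌈m i⌉ : ℤ) : ℝ)) • D.α i)
    (σ : V ≃ₗ[ℝ] V) (hσ : σ ∈ D.WI ω)
    (n : ℕ) (hn : 0 < n) (hneg : D.vle (σ ((n : ℝ) • ω)) 0) :
    D.len σ = D.len w + D.len (σ * w⁻¹) := by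
  have hcω : ∀ j, D.co j ω = (m j : ℝ) := fun j => by rw [hω, D.co_sum]
  -- the word for `w`
  obtain ⟨L₁, hL₁, hw₁⟩ := D.chain hmin (∑ i, ⌈m i⌉.toNat) 1 w (D.one_mem_WI ω) hwI
    (fun i => ⌈m i⌉.toNat) (by
      rw [hwω]
      change ω - _ = _
      rw [hω, ← Finset.sum_sub_distrib]
      refine Finset.sum_congr rfl fun i _ => ?_
      have h : ((⌈m i⌉.toNat : ℕ) : ℝ) = ((⌈m i⌉ : ℤ) : ℝ) := by
        have := Int.toNat_of_nonneg (Int.ceil_nonneg (hm i))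
        exact_mod_cast this
      rw [h, ← sub_smul]; congr 1; ring) rfl
  rw [mul_one] at hw₁
  -- integrality for `σ`
  obtain ⟨M, hM, hMσ⟩ := D.len_word hσ.1
  obtain ⟨hz, hht⟩ := D.word_height hmin M
  rw [hMσ] at hz hht
  choose z hz using hz
  have hle : ∀ j, D.co j (σ ω) ≤ 0 := by
    intro j
    have h := (D.nn_iff _).mp hneg j
    rw [zero_sub, map_smul, map_neg, map_smul, smul_eq_mul] at h
    have hn' : (0 : ℝ) < n := by exact_mod_cast hn
    by_contra hc
    push Not at hc
    have := mul_pos hn' hc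
    linarith
  have hzc : ∀ j, ⌈m j⌉ ≤ z j := by
    intro j
    rw [Int.ceil_le]
    have h1 := hz j
    rw [hcω] at h1
    have h2 : (m j : ℝ) ≤ (z j : ℝ) := by linarith [hle j]
    exact_mod_cast h2
  have hcast : ∀ j, (((z j - ⌈m j⌉).toNat : ℕ) : ℤ) = z j - ⌈m j⌉ := fun j =>
    Int.toNat_of_nonneg (sub_nonneg.mpr (hzc j))
  obtain ⟨L₂, hL₂, hw₂⟩ := D.chain hmin (∑ j, (z j - ⌈m j⌉).toNat) w σ hwI hσ
    (fun j => (z j - ⌈m j⌉).toNat) (by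
      rw [hwω, D.sum_co (σ ω), ← Finset.sum_sub_distrib]
      refine Finset.sum_congr rfl fun j _ => ?_
      have h : (((z j - ⌈m j⌉).toNat : ℕ) : ℝ) = (z j : ℝ) - ((⌈m j⌉ : ℤ) : ℝ) := by
        exact_mod_cast hcast j
      have h1 := hz j
      rw [hcω] at h1
      rw [h, ← sub_smul, ← h1]; congr 1; ring) rfl
  have hw₂' : σ * w⁻¹ = D.wordProd L₂ := by rw [← hw₂, mul_inv_cancel_right]
  have hu1 : D.len w ≤ ∑ i, ⌈m i⌉.toNat := by
    rw [← hL₁, ← hw₁]; exact D.len_le _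
  have hu2 : D.len (σ * w⁻¹) ≤ ∑ j, (z j - ⌈m j⌉).toNat := by
    rw [← hL₂, hw₂']; exact D.len_le _
  have hlow : ∑ i, ⌈m i⌉.toNat + ∑ j, (z j - ⌈m j⌉).toNat ≤ D.len σ := by
    rw [← hM]
    simp only [hz] at hht
    have h1 : ∑ j, z j ≤ (M.length : ℤ) := by exact_mod_cast hht
    have h2 : ((∑ i, ⌈m i⌉.toNat + ∑ j, (z j - ⌈m j⌉).toNat : ℕ) : ℤ) = ∑ j, z j := by
      rw [← Finset.sum_add_distrib, Nat.cast_sum]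
      refine Finset.sum_congr rfl fun j _ => ?_
      rw [Nat.cast_add, hcast j, Int.toNat_of_nonneg (Int.ceil_nonneg (hm j))]
      ring
    exact_mod_cast h2.le.trans h1
  have hsub : D.len σ ≤ D.len (σ * w⁻¹) + D.len w := by
    have := D.len_mul_le (D.W.mul_mem hσ.1 (D.W.inv_mem hwI.1)) hwI.1
    rwa [inv_mul_cancel_right] at this
  omega
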